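/- arXiv:2309.12413 — 3 statements merged into one kernel-verified Lean document; each statement's English description precedes it below -/
import Mathlib

section
/- There exists a constant d > 0, depending only on the number field F, such that for every nonzero ideal q of the ring of integers 𝒪_F with absolute norm N(q) ≥ 2, there exists a nonzero prime ideal u of 𝒪_F which does not divide q and satisfies N(u) ≤ d · log N(q). -/
open NumberField

/-!
Let `n = [F : ℚ]` and let `Λ` be the von Mangoldt function on ideals, so that `log N(a)` is the sum
of `Λ(I)` over the ideals `I` containing `a`. Sum this over the integers `a` in a cube of side `X`,
in coordinates for an integral basis, shifted so that all conjugates of `a` have size `≍ X`.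
An ideal `I` with `N(I) ≪ X ^ n` contains by pigeonhole a nonzero element with coordinates
`≪ N(I) ^ (1 / n)`, whose multiples bound the diameter of a fundamental domain of `I`, so `I` has
`X ^ n / N(I) + O(X ^ (n - 1) N(I) ^ (1 / n - 1))` points in the cube. Chebyshev's upper bound over
`ℚ` makes the total error `O(X ^ n)`, and Mertens' first theorem
`∑ Λ(I) / N(I) = log x + O(1)`, over `N(I) ≤ x`, follows.

Hence the primes of norm at most `x` satisfy `∑ log N(P) ≫ x`. If all of them divide `q`, then so
does their product, and `x ≪ log N(q)`.
-/


section LatticeCounting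

open Finset

variable {ι M : Type*} [AddCommGroup M] (b : Module.Basis ι ℤ M)

lemma exists_abs_repr_sub_nsmul_le [Finite ι] {N : ℕ} (hN : N ≠ 0) (x : M) :
    ∃ z, ∀ i, |b.repr (x - N • z) i| ≤ N := by
  cases nonempty_fintype ι
  refine ⟨b.equivFun.symm fun i => b.repr x i / N, fun i => ?_⟩
  have hNpos : (0 : ℤ) < N := by positivity
  have hmod : b.repr (x - N • b.equivFun.symm fun i => b.repr x i / N) i = b.repr x i % N := by
    rw [map_sub, map_nsmul, Finsupp.sub_apply, Finsupp.smul_apply,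
      ← b.equivFun_apply (b.equivFun.symm _), LinearEquiv.apply_symm_apply, nsmul_eq_mul,
      Int.emod_def]
  rw [hmod, abs_of_nonneg (Int.emod_nonneg _ hNpos.ne')]
  exact (Int.emod_lt_of_pos _ hNpos).le

variable [Fintype ι]

open Classical in
/-- The elements of `M` whose coordinates with respect to the basis `b` lie in the half-open cube
with corner `v` and side length `X`. -/
noncomputable def coordCube (v : ι → ℤ) (X : ℕ) : Finset M :=
  (Fintype.piFinset fun i => Ico (v i) (v i + X)).map b.equivFun.symm.toEquiv.toEmbedding

variable {b} in
lemma mem_coordCube {v : ι → ℤ} {X : ℕ} {a : M} :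
    a ∈ coordCube b v X ↔ ∀ i, v i ≤ b.repr a i ∧ b.repr a i < v i + X := by
  rw [coordCube, mem_map_equiv]
  simp

lemma card_coordCube (v : ι → ℤ) (X : ℕ) : #(coordCube b v X) = X ^ Fintype.card ι := by
  simp [coordCube]

variable (H : AddSubgroup M) [H.FiniteIndex]

lemma exists_ne_zero_mem_abs_repr_le {T : ℕ} (hT : H.index < (T + 1) ^ Fintype.card ι) :
    ∃ g ∈ H, g ≠ 0 ∧ ∀ i, |b.repr g i| ≤ T := by
  have := Fintype.ofFinite (M ⧸ H)
  have hcard : #(univ : Finset (M ⧸ H)) < #(coordCube b 0 (T + 1)) := by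
    rwa [card_coordCube, card_univ, ← Nat.card_eq_fintype_card]
  obtain ⟨x, hx, y, hy, hne, hxy⟩ := exists_ne_map_eq_of_card_lt_of_maps_to hcard
    (f := QuotientAddGroup.mk) fun _ _ => mem_univ _
  refine ⟨-x + y, QuotientAddGroup.eq.mp hxy, fun h => hne (neg_add_eq_zero.mp h), fun i => ?_⟩
  have hxi := mem_coordCube.mp hx i
  have hyi := mem_coordCube.mp hy i
  simp only [Pi.zero_apply, Nat.cast_add, Nat.cast_one] at hxi hyi
  simp only [map_add, map_neg, Finsupp.coe_add, Finsupp.coe_neg, Pi.add_apply, Pi.neg_apply,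
    abs_le]
  omega

variable {b H} {R : ℕ} (hR : ∀ t : M, ∃ r, t - r ∈ H ∧ ∀ i, |b.repr r i| ≤ R)
  (v : ι → ℤ) (X : ℕ)
include hR

open Classical in
lemma index_mul_card_filter_coordCube_le :
    H.index * #{a ∈ coordCube b v X | a ∈ H} ≤ (X + 2 * R) ^ Fintype.card ι := by
  have := Fintype.ofFinite (M ⧸ H)
  have hindex : H.index = #(univ : Finset (M ⧸ H)) := Nat.card_eq_fintype_card
  rw [mul_comm, hindex, ← card_coordCube b (fun i => v i - R)]
  refine mul_card_image_le_card_of_maps_to (f := ((↑) : M → M ⧸ H)) (fun _ _ => mem_univ _) _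
    fun c _ => ?_
  obtain ⟨t, rfl⟩ := QuotientAddGroup.mk_surjective c
  obtain ⟨r, htr, hr⟩ := hR t
  refine card_le_card_of_injOn (· + r) (fun a ha => ?_) (add_left_injective r).injOn
  simp only [coe_filter, Set.mem_ofPred_eq, mem_coordCube] at ha ⊢
  refine ⟨fun i => ?_, ?_⟩
  · have hai := ha.1 i
    have hri := abs_le.mp (hr i)
    simp only [map_add, Finsupp.coe_add, Pi.add_apply]
    omega
  · rw [QuotientAddGroup.eq_iff_sub_mem, ← sub_sub_eq_add_sub]
    exact H.sub_mem ha.2 htr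

open Classical in
lemma pow_le_index_mul_card_filter_coordCube :
    (X - 2 * R) ^ Fintype.card ι ≤ H.index * #{a ∈ coordCube b v X | a ∈ H} := by
  have := Fintype.ofFinite (M ⧸ H)
  have hindex : H.index = #(univ : Finset (M ⧸ H)) := Nat.card_eq_fintype_card
  rw [mul_comm H.index, hindex, ← card_coordCube b (fun i => v i + R)]
  refine card_le_mul_card_image_of_maps_to (f := ((↑) : M → M ⧸ H)) (fun _ _ => mem_univ _) _
    fun c _ => ?_
  obtain ⟨t, rfl⟩ := QuotientAddGroup.mk_surjective c
  obtain ⟨r, htr, hr⟩ := hR t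
  refine card_le_card_of_injOn (· - r) (fun a ha => ?_) sub_left_injective.injOn
  simp only [coe_filter, Set.mem_ofPred_eq, mem_coordCube] at ha ⊢
  refine ⟨fun i => ?_, ?_⟩
  · have hai := ha.1 i
    have hri := abs_le.mp (hr i)
    simp only [map_sub, Finsupp.coe_sub, Pi.sub_apply]
    omega
  · simpa using H.add_mem (QuotientAddGroup.eq_iff_sub_mem.mp ha.2) htr

open Classical in
lemma abs_index_mul_card_filter_coordCube_sub_le :
    |(H.index * #{a ∈ coordCube b v X | a ∈ H} : ℝ) - X ^ Fintype.card ι| ≤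
      2 * R * Fintype.card ι * (X + 2 * R) ^ (Fintype.card ι - 1) := by
  have hpow (y : ℝ) (hy : 0 ≤ y) (hle : y ≤ X + 2 * R) (hdist : |y - X| ≤ 2 * R) :
      |y ^ Fintype.card ι - X ^ Fintype.card ι| ≤
        2 * R * Fintype.card ι * (X + 2 * R) ^ (Fintype.card ι - 1) := by
    refine (abs_pow_sub_pow_le _ _ _).trans ?_
    rw [abs_of_nonneg hy, Nat.abs_cast]
    gcongr
    exact max_le hle (by simp)
  have hupper : (H.index * #{a ∈ coordCube b v X | a ∈ H} : ℝ) ≤ (X + 2 * R) ^ Fintype.card ι :=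
    mod_cast index_mul_card_filter_coordCube_le hR v X
  have hlower : ((X - 2 * R : ℕ) : ℝ) ^ Fintype.card ι ≤
      H.index * #{a ∈ coordCube b v X | a ∈ H} :=
    mod_cast pow_le_index_mul_card_filter_coordCube hR v X
  have hX : (X : ℝ) ≤ (X - 2 * R : ℕ) + 2 * R := mod_cast (by omega : X ≤ X - 2 * R + 2 * R)
  have hX' : ((X - 2 * R : ℕ) : ℝ) ≤ X := mod_cast Nat.sub_le _ _
  have : (0 : ℝ) ≤ R := R.cast_nonneg
  have h₁ := hpow (X + 2 * R) (by positivity) le_rfl (by simp)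
  have h₂ := hpow (X - 2 * R : ℕ) (by positivity) (by linarith)
    (abs_le.mpr ⟨by linarith, by linarith⟩)
  rw [abs_le] at h₁ h₂ ⊢
  constructor <;> linarith

end LatticeCounting

section IdealCounting

open Finset

variable {ι S : Type*} [CommRing S] (b : Module.Basis ι ℤ S)

lemma exists_abs_repr_mul_le [Finite ι] :
    ∃ s : ℕ, ∀ (x y : S) (A B : ℤ), (∀ i, |b.repr x i| ≤ A) → (∀ i, |b.repr y i| ≤ B) →
      ∀ k, |b.repr (x * y) k| ≤ s * (A * B) := by
  cases nonempty_fintype ι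
  refine ⟨∑ k, ∑ i, ∑ j, (b.repr (b i * b j) k).natAbs, fun x y A B hx hy k => ?_⟩
  have hxy : b.repr (x * y) k =
      ∑ i, ∑ j, b.repr x i * b.repr y j * b.repr (b i * b j) k := by
    conv_lhs => rw [← b.sum_repr x, ← b.sum_repr y, sum_mul_sum]
    simp only [smul_mul_smul_comm, map_sum, map_smul, Finsupp.finsetSum_apply,
      Finsupp.smul_apply, smul_eq_mul]
  have hterm (i j : ι) : |b.repr x i * b.repr y j| ≤ A * B := by
    rw [abs_mul]
    exact mul_le_mul (hx i) (hy j) (abs_nonneg _) ((abs_nonneg _).trans (hx i))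
  calc |b.repr (x * y) k|
      ≤ ∑ i, ∑ j, |b.repr x i * b.repr y j * b.repr (b i * b j) k| := by
        rw [hxy]
        exact (abs_sum_le_sum_abs _ _).trans (sum_le_sum fun i _ => abs_sum_le_sum_abs _ _)
    _ ≤ ∑ i, ∑ j, A * B * |b.repr (b i * b j) k| := by
        gcongr with i _ j _
        rw [abs_mul]
        exact mul_le_mul_of_nonneg_right (hterm i j) (abs_nonneg _)
    _ = (∑ i, ∑ j, |b.repr (b i * b j) k|) * (A * B) := by
        simp only [← mul_sum, mul_comm]
    _ ≤ _ := by
        rcases isEmpty_or_nonempty ι with _ | ⟨⟨i⟩⟩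
        · simp
        have hAB : 0 ≤ A * B := (abs_nonneg _).trans (hterm i i)
        refine mul_le_mul_of_nonneg_right ?_ hAB
        push_cast
        exact single_le_sum (f := fun k => ∑ i, ∑ j, |b.repr (b i * b j) k|)
          (fun k _ => by positivity) (mem_univ k)

variable [IsDomain S]

include b in
lemma finiteIndex_toAddSubgroup_of_basis [Finite ι] {I : Ideal S} (hI : I ≠ ⊥) :
    I.toAddSubgroup.FiniteIndex := by
  have := Module.Free.of_basis b
  have := Module.Finite.of_basis b
  have := Ideal.finiteQuotientOfFreeOfNeBot I hI
  exact ⟨(Nat.card_pos (α := S ⧸ I)).ne'⟩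

variable [Fintype ι]

lemma exists_sub_mem_abs_repr_le :
    ∃ s : ℕ, ∀ (I : Ideal S) (T : ℕ), I ≠ ⊥ → I.toAddSubgroup.index < (T + 1) ^ Fintype.card ι →
      ∀ t, ∃ r, t - r ∈ I ∧ ∀ i, |b.repr r i| ≤ (s * T : ℕ) := by
  obtain ⟨s, hs⟩ := exists_abs_repr_mul_le b
  refine ⟨s, fun I T hI hT t => ?_⟩
  have := finiteIndex_toAddSubgroup_of_basis b hI
  obtain ⟨g, hgI, hg0, hgT⟩ := exists_ne_zero_mem_abs_repr_le b I.toAddSubgroup hT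
  have := finiteIndex_toAddSubgroup_of_basis b (I := Ideal.span {g}) (by simpa using hg0)
  set N := (Ideal.span {g}).toAddSubgroup.index
  have hN0 : N ≠ 0 := AddSubgroup.FiniteIndex.index_ne_zero
  obtain ⟨g', hg'⟩ : g ∣ N • (1 : S) := Ideal.mem_span_singleton.mp <|
    (Ideal.span {g}).toAddSubgroup.nsmul_index_mem 1
  obtain ⟨z, hz⟩ := exists_abs_repr_sub_nsmul_le b hN0 (t * g')
  have hkey : N • (t - g * z) = g * (t * g' - N • z) := by
    simp only [nsmul_eq_mul, mul_one] at hg' ⊢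
    linear_combination t * hg'
  refine ⟨t - g * z, by simpa using I.mul_mem_right z hgI, fun k => ?_⟩
  have hNk := hs _ _ _ _ hgT hz k
  rw [← hkey, map_nsmul, Finsupp.smul_apply, nsmul_eq_mul, abs_mul, Nat.abs_cast] at hNk
  refine le_of_mul_le_mul_left (a := (N : ℤ)) ?_ (by positivity)
  push_cast
  linarith

lemma lt_floor_rpow_inv_add_one_pow (N : ℕ) {n : ℕ} (hn : n ≠ 0) :
    N < (⌊(N : ℝ) ^ (n : ℝ)⁻¹⌋₊ + 1) ^ n := by
  have h := pow_lt_pow_left₀ (Nat.lt_floor_add_one ((N : ℝ) ^ (n : ℝ)⁻¹)) (by positivity) hn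
  rw [Real.rpow_inv_natCast_pow N.cast_nonneg hn] at h
  exact_mod_cast h

open Classical in
lemma exists_abs_index_mul_card_filter_coordCube_sub_le {C : ℝ} (hC : 0 ≤ C) :
    ∃ K : ℝ, 0 ≤ K ∧ ∀ (I : Ideal S) (v : ι → ℤ) (X : ℕ), I ≠ ⊥ →
      (I.toAddSubgroup.index : ℝ) ≤ (C * X) ^ Fintype.card ι →
      |(I.toAddSubgroup.index * #{a ∈ coordCube b v X | a ∈ I} : ℝ) - X ^ Fintype.card ι| ≤
        K * X ^ (Fintype.card ι - 1) *
          (I.toAddSubgroup.index : ℝ) ^ (Fintype.card ι : ℝ)⁻¹ := by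
  obtain ⟨s, hs⟩ := exists_sub_mem_abs_repr_le b
  have := b.index_nonempty
  set n := Fintype.card ι
  have hn : n ≠ 0 := Fintype.card_ne_zero
  refine ⟨2 * s * n * (1 + 2 * s * C) ^ (n - 1), by positivity, fun I v X hI hIX => ?_⟩
  set N := I.toAddSubgroup.index
  have hroot : (N : ℝ) ^ (n : ℝ)⁻¹ ≤ C * X := by
    rw [Real.rpow_inv_le_iff_of_pos N.cast_nonneg (by positivity) (by positivity)]
    exact_mod_cast hIX
  have := finiteIndex_toAddSubgroup_of_basis b hI
  have hT : (⌊(N : ℝ) ^ (n : ℝ)⁻¹⌋₊ : ℝ) ≤ (N : ℝ) ^ (n : ℝ)⁻¹ := Nat.floor_le (by positivity)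
  set T := ⌊(N : ℝ) ^ (n : ℝ)⁻¹⌋₊
  calc |(N * #{a ∈ coordCube b v X | a ∈ I} : ℝ) - X ^ n|
      ≤ 2 * (s * T : ℕ) * n * (X + 2 * (s * T : ℕ)) ^ (n - 1) :=
        abs_index_mul_card_filter_coordCube_sub_le (H := I.toAddSubgroup)
          (hs I T hI (lt_floor_rpow_inv_add_one_pow N hn)) v X
    _ ≤ 2 * (s * (N : ℝ) ^ (n : ℝ)⁻¹) * n * (X + 2 * (s * (C * X))) ^ (n - 1) := by
        push_cast
        gcongr
        exact hT.trans hroot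
    _ = 2 * s * n * (1 + 2 * s * C) ^ (n - 1) * X ^ (n - 1) * (N : ℝ) ^ (n : ℝ)⁻¹ := by
        rw [show (X + 2 * (s * (C * X)) : ℝ) = (1 + 2 * s * C) * X by ring, mul_pow]
        ring

end IdealCounting

section Embeddings

open Finset

variable {F : Type*} [Field F] [NumberField F]

lemma absNorm_span_singleton_eq_prod_embeddings (a : 𝓞 F) :
    (Ideal.absNorm (Ideal.span {a}) : ℝ) = ∏ φ : F →ₐ[ℚ] ℂ, ‖φ a‖ := by
  rw [Ideal.absNorm_span_singleton, ← norm_prod, ← Algebra.norm_eq_prod_embeddings,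
    ← Algebra.coe_norm_int]
  simp [Nat.cast_natAbs]

lemma absNorm_span_singleton_mem_Icc {a : 𝓞 F} {A B : ℝ} (hA : 0 ≤ A)
    (h : ∀ φ : F →ₐ[ℚ] ℂ, ‖φ a‖ ∈ Set.Icc A B) :
    (Ideal.absNorm (Ideal.span {a}) : ℝ) ∈
      Set.Icc (A ^ Module.finrank ℚ F) (B ^ Module.finrank ℚ F) := by
  have hcard : Module.finrank ℚ F = #(univ : Finset (F →ₐ[ℚ] ℂ)) := by
    rw [card_univ, AlgHom.card]
  rw [absNorm_span_singleton_eq_prod_embeddings, hcard, ← prod_const, ← prod_const]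
  exact ⟨prod_le_prod (fun _ _ => hA) fun φ _ => (h φ).1,
    prod_le_prod (fun _ _ => norm_nonneg _) fun φ _ => (h φ).2⟩

variable {ι : Type*} (b : Module.Basis ι ℤ (𝓞 F))

lemma exists_norm_embedding_le [Finite ι] :
    ∃ C : ℕ, ∀ (a : 𝓞 F) (X : ℕ), (∀ i, |b.repr a i| ≤ X) →
      ∀ φ : F →ₐ[ℚ] ℂ, ‖φ a‖ ≤ C * X := by
  cases nonempty_fintype ι
  obtain ⟨C, hC⟩ := exists_nat_ge (∑ φ : F →ₐ[ℚ] ℂ, ∑ i, ‖φ (b i)‖)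
  refine ⟨C, fun a X h φ => ?_⟩
  have hsum : φ a = ∑ i, (b.repr a i : ℂ) * φ (b i) := by
    conv_lhs => rw [← b.sum_repr a]
    simp [zsmul_eq_mul]
  calc ‖φ a‖ ≤ ∑ i, ‖(b.repr a i : ℂ) * φ (b i)‖ := hsum ▸ norm_sum_le _ _
    _ ≤ ∑ i, X * ‖φ (b i)‖ := by
        gcongr with i
        rw [norm_mul, Complex.norm_intCast]
        gcongr
        exact_mod_cast h i
    _ = (∑ i, ‖φ (b i)‖) * X := by rw [← mul_sum, mul_comm]
    _ ≤ C * X := by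
        gcongr
        exact (single_le_sum (f := fun φ : F →ₐ[ℚ] ℂ => ∑ i, ‖φ (b i)‖)
          (fun φ _ => by positivity) (mem_univ φ)).trans hC

variable [Fintype ι]

-- Shifting the cube by a large rational integer keeps every conjugate away from `0`.
lemma exists_absNorm_mem_Icc_of_mem_coordCube :
    ∃ k C : ℕ, 0 < C ∧ ∀ X : ℕ, ∀ a ∈ coordCube b (b.equivFun (k * X : ℕ)) X,
      (Ideal.absNorm (Ideal.span {a}) : ℝ) ∈
        Set.Icc ((X : ℝ) ^ Module.finrank ℚ F) ((C * X) ^ Module.finrank ℚ F) := by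
  obtain ⟨c, hc⟩ := exists_norm_embedding_le b
  refine ⟨c + 1, 2 * c + 1, by positivity, fun X a ha => ?_⟩
  refine absNorm_span_singleton_mem_Icc X.cast_nonneg fun φ => ?_
  set z : 𝓞 F := (((c + 1) * X : ℕ) : 𝓞 F)
  have hdist : ‖φ (a - z : 𝓞 F)‖ ≤ c * X := hc _ X (fun i => by
    have hai := mem_coordCube.mp ha i
    rw [b.equivFun_apply] at hai
    rw [map_sub, Finsupp.sub_apply, abs_le]
    omega) φ
  have hz : ‖φ z‖ = ((c + 1) * X : ℕ) := by
    rw [← Complex.norm_natCast]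
    simp [z]
  have hsplit : φ (a - z : 𝓞 F) = φ a - φ z := by simp
  have h₁ := norm_sub_norm_le (φ z) (φ a)
  have h₂ := norm_sub_norm_le (φ a) (φ z)
  rw [norm_sub_rev] at h₁
  rw [hsplit] at hdist
  push_cast at hz ⊢
  constructor <;> linarith

end Embeddings

section DedekindDomain

open Finset UniqueFactorizationMonoid

variable {R : Type*} [CommRing R] [IsDedekindDomain R]

lemma radical_prime_pow {P : Ideal R} (hP : Prime P) {k : ℕ} (hk : k ≠ 0) :
    (P ^ k).radical = P := by
  rw [Ideal.radical_pow _ hk, (Ideal.isPrime_of_prime hP).radical]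

lemma prime_radical {I : Ideal R} (hI : IsPrimePow I) : Prime I.radical := by
  obtain ⟨P, k, hP, hk, rfl⟩ := hI
  rwa [radical_prime_pow hP hk.ne']

lemma pow_dvd_iff_le_count_normalizedFactors {I P : Ideal R} (hI : I ≠ ⊥) (hP : Prime P)
    {k : ℕ} : P ^ k ∣ I ↔ k ≤ (normalizedFactors I).count P := by
  rw [pow_dvd_iff_le_emultiplicity, emultiplicity_eq_count_normalizedFactors hP.irreducible hI,
    normalize_eq, Nat.cast_le]

variable [Module.Free ℤ R] [Module.Finite ℤ R]

lemma absNorm_pos {I : Ideal R} (hI : I ≠ ⊥) : 0 < Ideal.absNorm I :=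
  Nat.pos_of_ne_zero (mt Ideal.absNorm_eq_zero_iff.mp hI)

lemma one_lt_absNorm {P : Ideal R} (hP : Prime P) : 1 < Ideal.absNorm P := by
  have h1 := mt Ideal.absNorm_eq_one_iff.mp (Ideal.isPrime_of_prime hP).ne_top
  have h0 := absNorm_pos hP.ne_zero
  omega

lemma log_absNorm_eq_sum_count {I : Ideal R} (hI : I ≠ ⊥) :
    Real.log (Ideal.absNorm I) = ∑ P ∈ (normalizedFactors I).toFinset,
      (normalizedFactors I).count P * Real.log (Ideal.absNorm P) := by
  conv_lhs => rw [← Ideal.prod_normalizedFactors_eq_self hI, prod_multiset_count]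
  rw [map_prod, Nat.cast_prod, Real.log_prod]
  · simp only [map_pow, Nat.cast_pow, Real.log_pow]
  · intro P hP
    have hP := (prime_of_normalized_factor P (Multiset.mem_toFinset.mp hP)).ne_zero
    exact_mod_cast (absNorm_pos (pow_ne_zero _ hP)).ne'

end DedekindDomain

section VonMangoldt

open Finset ArithmeticFunction

variable (F : Type*) [Field F] [NumberField F]

/-- The nonzero ideals of `𝓞 F` of norm at most `x`; the zero ideal has to be excluded because
its `Ideal.absNorm` is `0`. -/
noncomputable def idealsLE (x : ℝ) : Finset (Ideal (𝓞 F)) :=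
  {I ∈ (Ideal.finite_setOfPred_absNorm_le (S := 𝓞 F) ⌊x⌋₊).toFinset | I ≠ ⊥}

variable {F}

lemma mem_idealsLE {x : ℝ} {I : Ideal (𝓞 F)} :
    I ∈ idealsLE F x ↔ I ≠ ⊥ ∧ (Ideal.absNorm I : ℝ) ≤ x := by
  rw [idealsLE, mem_filter, Set.Finite.mem_toFinset, Set.mem_ofPred_eq, and_comm]
  exact and_congr_right fun hI => Nat.le_floor_iff' (absNorm_pos hI).ne'

lemma mem_idealsLE_of_dvd {x : ℝ} {I J : Ideal (𝓞 F)} (hI : I ∈ idealsLE F x) (hJI : J ∣ I) :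
    J ∈ idealsLE F x := by
  obtain ⟨hI0, hIx⟩ := mem_idealsLE.mp hI
  refine mem_idealsLE.mpr ⟨ne_zero_of_dvd_ne_zero hI0 hJI, le_trans ?_ hIx⟩
  exact_mod_cast Nat.le_of_dvd (absNorm_pos hI0) (map_dvd _ hJI)

open Classical in
/-- The von Mangoldt function of the number field `F`: its value at a power `P ^ k`, `k ≠ 0`, of a
nonzero prime ideal `P` is `log N(P)`, and it vanishes at all other ideals. The prime `P` is
recovered as the radical of `P ^ k`. -/
noncomputable def idealVonMangoldt (I : Ideal (𝓞 F)) : ℝ :=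
  if IsPrimePow I then Real.log (Ideal.absNorm I.radical) else 0

lemma idealVonMangoldt_nonneg (I : Ideal (𝓞 F)) : 0 ≤ idealVonMangoldt I := by
  unfold idealVonMangoldt
  split_ifs
  exacts [Real.log_natCast_nonneg _, le_rfl]

lemma isPrimePow_of_idealVonMangoldt_ne_zero {I : Ideal (𝓞 F)} (hI : idealVonMangoldt I ≠ 0) :
    IsPrimePow I :=
  by_contra fun h => hI (if_neg h)

lemma idealVonMangoldt_prime_pow {P : Ideal (𝓞 F)} (hP : Prime P) {k : ℕ} (hk : k ≠ 0) :
    idealVonMangoldt (P ^ k) = Real.log (Ideal.absNorm P) := by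
  rw [idealVonMangoldt, if_pos (hP.isPrimePow.pow hk), radical_prime_pow hP hk]

section Factorization

open UniqueFactorizationMonoid

open Classical in
lemma filter_dvd_isPrimePow_idealsLE {x : ℝ} {I : Ideal (𝓞 F)} (hI : I ∈ idealsLE F x) :
    {J ∈ idealsLE F x | J ∣ I ∧ IsPrimePow J} =
      ((normalizedFactors I).toFinset.sigma
        fun P => Icc 1 ((normalizedFactors I).count P)).image fun p => p.1 ^ p.2 := by
  have hI0 := (mem_idealsLE.mp hI).1
  ext J
  simp only [mem_filter, mem_image, mem_sigma, Multiset.mem_toFinset, mem_Icc]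
  constructor
  · rintro ⟨-, hJI, P, k, hP, hk, rfl⟩
    have hkP := (pow_dvd_iff_le_count_normalizedFactors hI0 hP).mp hJI
    exact ⟨⟨P, k⟩, ⟨Multiset.count_pos.mp (hk.trans_le hkP), hk, hkP⟩, rfl⟩
  · rintro ⟨⟨P, k⟩, ⟨hPI, hk, hkP⟩, rfl⟩
    have hP := prime_of_normalized_factor P hPI
    have hdvd := (pow_dvd_iff_le_count_normalizedFactors hI0 hP).mpr hkP
    exact ⟨mem_idealsLE_of_dvd hI hdvd, hdvd, P, k, hP, hk, rfl⟩

open Classical in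
lemma sum_idealVonMangoldt_dvd {x : ℝ} {I : Ideal (𝓞 F)} (hI : I ∈ idealsLE F x) :
    ∑ J ∈ idealsLE F x with J ∣ I, idealVonMangoldt J = Real.log (Ideal.absNorm I) := by
  have hprime {P : Ideal (𝓞 F)} (hP : P ∈ (normalizedFactors I).toFinset) : Prime P :=
    prime_of_normalized_factor P (Multiset.mem_toFinset.mp hP)
  have hinj : Set.InjOn (fun p : Σ _ : Ideal (𝓞 F), ℕ => p.1 ^ p.2)
      ((normalizedFactors I).toFinset.sigma
        fun P => Icc 1 ((normalizedFactors I).count P)) := by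
    rintro ⟨P, k⟩ hPk ⟨Q, l⟩ hQl hPQ
    simp only [mem_coe, mem_sigma, mem_Icc] at hPk hQl hPQ
    have hPQ' : P = Q := by
      rw [← radical_prime_pow (hprime hPk.1) (by omega : k ≠ 0), hPQ,
        radical_prime_pow (hprime hQl.1) (by omega)]
    subst hPQ'
    have hkl : k = l := Nat.pow_right_injective (one_lt_absNorm (hprime hPk.1))
      (by simpa using congrArg Ideal.absNorm hPQ)
    rw [hkl]
  calc ∑ J ∈ idealsLE F x with J ∣ I, idealVonMangoldt J
      = ∑ J ∈ idealsLE F x with J ∣ I ∧ IsPrimePow J, idealVonMangoldt J := by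
        rw [← filter_filter,
          sum_filter_of_ne fun _ _ => isPrimePow_of_idealVonMangoldt_ne_zero]
    _ = ∑ P ∈ (normalizedFactors I).toFinset, ∑ k ∈ Icc 1 ((normalizedFactors I).count P),
          idealVonMangoldt (P ^ k) := by
        rw [filter_dvd_isPrimePow_idealsLE hI, sum_image hinj, sum_sigma]
    _ = ∑ P ∈ (normalizedFactors I).toFinset,
          (normalizedFactors I).count P * Real.log (Ideal.absNorm P) := by
        refine sum_congr rfl fun P hP => ?_
        rw [sum_congr rfl fun k hk => idealVonMangoldt_prime_pow (hprime hP)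
          (Nat.one_le_iff_ne_zero.mp (mem_Icc.mp hk).1)]
        simp
    _ = Real.log (Ideal.absNorm I) := (log_absNorm_eq_sum_count (mem_idealsLE.mp hI).1).symm

end Factorization

lemma exists_absNorm_eq_pow_and_radical_dvd {I : Ideal (𝓞 F)} (hI : IsPrimePow I) :
    ∃ p k : ℕ, p.Prime ∧ k ≠ 0 ∧ Ideal.absNorm I = p ^ k ∧
      I.radical ∣ Ideal.span {(p : 𝓞 F)} := by
  obtain ⟨P, k, hP, hk, rfl⟩ := hI
  have := (Ideal.isPrime_of_prime hP).isMaximal hP.ne_zero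
  obtain ⟨p, f, hf, hpP, hp, hPp⟩ := Ideal.exists_prime_and_absNorm_eq_pow P
  refine ⟨p, f * k, hp, by positivity, by rw [map_pow, hPp, pow_mul], ?_⟩
  rwa [radical_prime_pow hP hk.ne', Ideal.dvd_span_singleton]

lemma isPrimePow_absNorm {I : Ideal (𝓞 F)} (hI : IsPrimePow I) :
    IsPrimePow (Ideal.absNorm I) := by
  obtain ⟨p, k, hp, hk, hIp, -⟩ := exists_absNorm_eq_pow_and_radical_dvd hI
  exact hIp ▸ hp.isPrimePow.pow hk

lemma radical_dvd_span_minFac_absNorm {I : Ideal (𝓞 F)} (hI : IsPrimePow I) :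
    I.radical ∣ Ideal.span {((Ideal.absNorm I).minFac : 𝓞 F)} := by
  obtain ⟨p, k, hp, hk, hIp, hdvd⟩ := exists_absNorm_eq_pow_and_radical_dvd hI
  rwa [hIp, hp.pow_minFac hk]

lemma radical_injOn_isPrimePow_absNorm_eq (m : ℕ) :
    Set.InjOn Ideal.radical {I : Ideal (𝓞 F) | IsPrimePow I ∧ Ideal.absNorm I = m} := by
  rintro _ ⟨⟨P, k, hP, hk, rfl⟩, hPm⟩ _ ⟨⟨Q, l, hQ, hl, rfl⟩, hQm⟩ hPQ
  rw [radical_prime_pow hP hk.ne', radical_prime_pow hQ hl.ne'] at hPQ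
  subst hPQ
  have hkl : k = l := Nat.pow_right_injective (one_lt_absNorm hP)
    (by simpa only [map_pow] using hPm.trans hQm.symm)
  rw [hkl]

-- The radicals are distinct primes dividing `(p)`, where `m` is a power of the rational prime `p`.
lemma prod_absNorm_radical_dvd {m : ℕ} {S : Finset (Ideal (𝓞 F))}
    (hS : ∀ I ∈ S, IsPrimePow I ∧ Ideal.absNorm I = m) :
    ∏ I ∈ S, Ideal.absNorm I.radical ∣ m.minFac ^ Module.finrank ℚ F := by
  have hdvd : ∏ P ∈ S.image Ideal.radical, P ∣ Ideal.span {(m.minFac : 𝓞 F)} := by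
    refine prod_primes_dvd _ (forall_mem_image.mpr fun I hI => prime_radical (hS I hI).1)
      (forall_mem_image.mpr fun I hI => ?_)
    rw [← (hS I hI).2]
    exact radical_dvd_span_minFac_absNorm (hS I hI).1
  rw [prod_image ((radical_injOn_isPrimePow_absNorm_eq m).mono hS)] at hdvd
  rw [← map_prod, ← RingOfIntegers.rank, ← Ideal.absNorm_span_natCast]
  exact map_dvd _ hdvd

lemma sum_idealVonMangoldt_absNorm_eq_le (x : ℝ) (m : ℕ) :
    ∑ I ∈ idealsLE F x with Ideal.absNorm I = m, idealVonMangoldt I ≤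
      Module.finrank ℚ F * vonMangoldt m := by
  classical
  set S := {I ∈ idealsLE F x | Ideal.absNorm I = m ∧ IsPrimePow I}
  have hS (I) (hI : I ∈ S) : IsPrimePow I ∧ Ideal.absNorm I = m := (mem_filter.mp hI).2.symm
  have hsum : ∑ I ∈ idealsLE F x with Ideal.absNorm I = m, idealVonMangoldt I =
      ∑ I ∈ S, Real.log (Ideal.absNorm I.radical) := by
    rw [← sum_filter_of_ne fun _ _ => isPrimePow_of_idealVonMangoldt_ne_zero, filter_filter]
    exact sum_congr rfl fun I hI => if_pos (hS I hI).1
  rcases S.eq_empty_or_nonempty with hempty | ⟨I₀, hI₀⟩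
  · rw [hsum, hempty, sum_empty]
    exact mul_nonneg (Nat.cast_nonneg _) vonMangoldt_nonneg
  have hm : IsPrimePow m := (hS I₀ hI₀).2 ▸ isPrimePow_absNorm (hS I₀ hI₀).1
  have hpos (I) (hI : I ∈ S) : 0 < Ideal.absNorm I.radical :=
    absNorm_pos (prime_radical (hS I hI).1).ne_zero
  rw [hsum, vonMangoldt_apply, if_pos hm, ← Real.log_pow,
    ← Real.log_prod fun I hI => (Nat.cast_pos.mpr (hpos I hI)).ne']
  refine Real.log_le_log (prod_pos fun I hI => Nat.cast_pos.mpr (hpos I hI)) ?_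
  exact_mod_cast Nat.le_of_dvd (pow_pos m.minFac_pos _) (prod_absNorm_radical_dvd hS)

lemma sum_idealVonMangoldt_mul_le (x : ℝ) {f : ℕ → ℝ} (hf : ∀ m, 0 ≤ f m) :
    ∑ I ∈ idealsLE F x, idealVonMangoldt I * f (Ideal.absNorm I) ≤
      Module.finrank ℚ F * ∑ m ∈ Ioc 0 ⌊x⌋₊, vonMangoldt m * f m := by
  have hmaps (I) (hI : I ∈ idealsLE F x) : Ideal.absNorm I ∈ Ioc 0 ⌊x⌋₊ :=
    mem_Ioc.mpr ⟨absNorm_pos (mem_idealsLE.mp hI).1, Nat.le_floor (mem_idealsLE.mp hI).2⟩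
  rw [← sum_fiberwise_of_maps_to hmaps, mul_sum]
  refine sum_le_sum fun m _ => ?_
  calc ∑ I ∈ idealsLE F x with Ideal.absNorm I = m, idealVonMangoldt I * f (Ideal.absNorm I)
      = (∑ I ∈ idealsLE F x with Ideal.absNorm I = m, idealVonMangoldt I) * f m := by
        rw [sum_mul]
        exact sum_congr rfl fun I hI => by rw [(mem_filter.mp hI).2]
    _ ≤ Module.finrank ℚ F * vonMangoldt m * f m :=
        mul_le_mul_of_nonneg_right (sum_idealVonMangoldt_absNorm_eq_le x m) (hf m)
    _ = _ := mul_assoc _ _ _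

end VonMangoldt

section WeightedChebyshev

open Finset ArithmeticFunction

lemma mul_sum_Ioc_le_sum_Ioc_mul {a f : ℕ → ℝ} (hf : AntitoneOn f (Set.Ici 1))
    (ha : ∀ y, 0 ≤ ∑ m ∈ Ioc 0 y, a m) (y : ℕ) :
    f y * ∑ m ∈ Ioc 0 y, a m ≤ ∑ m ∈ Ioc 0 y, a m * f m := by
  induction y with
  | zero => simp
  | succ y ih =>
    rw [sum_Ioc_succ_top y.zero_le, sum_Ioc_succ_top y.zero_le]
    have hstep : f (y + 1) * ∑ m ∈ Ioc 0 y, a m ≤ f y * ∑ m ∈ Ioc 0 y, a m := by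
      rcases y.eq_zero_or_pos with rfl | hy
      · simp
      · exact mul_le_mul_of_nonneg_right (hf hy (by simp) y.le_succ) (ha y)
    linarith

variable {t : ℝ} (ht0 : 0 < t) (ht1 : t ≤ 1)
include ht0 ht1

lemma sum_Ioc_rpow_sub_one_le (y : ℕ) : ∑ m ∈ Ioc 0 y, (m : ℝ) ^ (t - 1) ≤ (y : ℝ) ^ t / t := by
  induction y with
  | zero => simp [ht0.ne']
  | succ y ih =>
    rw [sum_Ioc_succ_top y.zero_le]
    set z : ℝ := ((y + 1 : ℕ) : ℝ)
    have hz : 0 < z := by positivity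
    have hy : (y : ℝ) = z * (1 + -z⁻¹) := by
      rw [mul_add, mul_neg, mul_inv_cancel₀ hz.ne']
      simp [z]
    have hz1 : z⁻¹ ≤ 1 := inv_le_one_of_one_le₀ (by simp [z])
    have hbernoulli : (y : ℝ) ^ t ≤ z ^ t - t * z ^ (t - 1) := by
      calc (y : ℝ) ^ t = z ^ t * (1 + -z⁻¹) ^ t := by
            rw [hy, Real.mul_rpow hz.le (by linarith)]
        _ ≤ z ^ t * (1 + t * -z⁻¹) := by
            gcongr
            exact rpow_one_add_le_one_add_mul_self (by linarith) ht0.le ht1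
        _ = z ^ t - t * z ^ (t - 1) := by
            rw [Real.rpow_sub_one hz.ne']
            ring
    rw [le_div_iff₀ ht0] at ih ⊢
    linarith

lemma sum_vonMangoldt_mul_rpow_le (y : ℕ) :
    ∑ m ∈ Ioc 0 y, vonMangoldt m * (m : ℝ) ^ (t - 1) ≤ (Real.log 4 + 4) / t * (y : ℝ) ^ t := by
  have hanti : AntitoneOn (fun m : ℕ => (m : ℝ) ^ (t - 1)) (Set.Ici 1) := fun k hk l _ hkl =>
    Real.rpow_le_rpow_of_nonpos (Nat.cast_pos.mpr hk) (Nat.cast_le.mpr hkl) (by linarith)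
  have hchebyshev (y : ℕ) : 0 ≤ ∑ m ∈ Ioc 0 y, (Real.log 4 + 4 - vonMangoldt m) := by
    have h := Chebyshev.psi_le_const_mul_self y.cast_nonneg
    rw [Chebyshev.psi, Nat.floor_natCast] at h
    rw [sum_sub_distrib, sum_const, Nat.card_Ioc, tsub_zero, nsmul_eq_mul]
    linarith
  have habel : 0 ≤ ∑ m ∈ Ioc 0 y, (Real.log 4 + 4 - vonMangoldt m) * (m : ℝ) ^ (t - 1) :=
    (mul_nonneg (by positivity) (hchebyshev y)).trans
      (mul_sum_Ioc_le_sum_Ioc_mul hanti hchebyshev y)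
  simp only [sub_mul, sum_sub_distrib, ← mul_sum] at habel
  calc _ ≤ (Real.log 4 + 4) * ∑ m ∈ Ioc 0 y, (m : ℝ) ^ (t - 1) := by linarith
    _ ≤ (Real.log 4 + 4) * ((y : ℝ) ^ t / t) := by
        gcongr
        exact sum_Ioc_rpow_sub_one_le ht0 ht1 y
    _ = _ := by ring

lemma sum_idealVonMangoldt_mul_rpow_le (F : Type*) [Field F] [NumberField F]
    {x : ℝ} (hx : 0 ≤ x) :
    ∑ I ∈ idealsLE F x, idealVonMangoldt I * (Ideal.absNorm I : ℝ) ^ (t - 1) ≤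
      Module.finrank ℚ F * ((Real.log 4 + 4) / t) * x ^ t := by
  calc _ ≤ Module.finrank ℚ F * ∑ m ∈ Ioc 0 ⌊x⌋₊, vonMangoldt m * (m : ℝ) ^ (t - 1) :=
        sum_idealVonMangoldt_mul_le x fun m => by positivity
    _ ≤ Module.finrank ℚ F * ((Real.log 4 + 4) / t * (⌊x⌋₊ : ℝ) ^ t) := by
        gcongr
        exact sum_vonMangoldt_mul_rpow_le ht0 ht1 _
    _ ≤ Module.finrank ℚ F * ((Real.log 4 + 4) / t * x ^ t) := by
        gcongr
        exact Nat.floor_le hx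
    _ = _ := by ring

end WeightedChebyshev

section Mertens

open Finset

variable {F : Type*} [Field F] [NumberField F]

open Classical in
lemma sum_log_absNorm_eq_sum_idealVonMangoldt_mul_card {x : ℝ} {Q : Finset (𝓞 F)}
    (hQ : ∀ a ∈ Q, Ideal.span {a} ∈ idealsLE F x) :
    ∑ a ∈ Q, Real.log (Ideal.absNorm (Ideal.span {a})) =
      ∑ I ∈ idealsLE F x, idealVonMangoldt I * #{a ∈ Q | a ∈ I} := by
  calc _ = ∑ a ∈ Q, ∑ I ∈ idealsLE F x, if a ∈ I then idealVonMangoldt I else 0 := by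
        refine sum_congr rfl fun a ha => ?_
        simp only [← sum_idealVonMangoldt_dvd (hQ a ha), sum_filter, Ideal.dvd_span_singleton]
    _ = _ := by
        rw [sum_comm]
        refine sum_congr rfl fun I _ => ?_
        rw [← sum_filter, sum_const, nsmul_eq_mul, mul_comm]

lemma abs_idealVonMangoldt_mul_sub_le {I : Ideal (𝓞 F)} (hI : I ≠ ⊥) {count V ε t : ℝ}
    (h : |Ideal.absNorm I * count - V| ≤ ε * (Ideal.absNorm I : ℝ) ^ t) :
    |idealVonMangoldt I * count - V * (idealVonMangoldt I / Ideal.absNorm I)| ≤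
      ε * (idealVonMangoldt I * (Ideal.absNorm I : ℝ) ^ (t - 1)) := by
  have hN : (0 : ℝ) < Ideal.absNorm I := Nat.cast_pos.mpr (absNorm_pos hI)
  have hweight : 0 ≤ idealVonMangoldt I / Ideal.absNorm I :=
    div_nonneg (idealVonMangoldt_nonneg I) hN.le
  calc _ = |idealVonMangoldt I / Ideal.absNorm I * (Ideal.absNorm I * count - V)| := by
        congr 1
        field_simp
    _ = idealVonMangoldt I / Ideal.absNorm I * |Ideal.absNorm I * count - V| := by
        rw [abs_mul, abs_of_nonneg hweight]
    _ ≤ idealVonMangoldt I / Ideal.absNorm I * (ε * (Ideal.absNorm I : ℝ) ^ t) :=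
        mul_le_mul_of_nonneg_left h hweight
    _ = _ := by
        rw [Real.rpow_sub_one hN.ne']
        ring

variable {ι : Type*} [Fintype ι] (b : Module.Basis ι ℤ (𝓞 F))

include b in
lemma card_basis_ringOfIntegers : Fintype.card ι = Module.finrank ℚ F := by
  rw [← RingOfIntegers.rank, Module.finrank_eq_card_basis b]

variable (F) in
/-- The sum of `Λ(I) / N(I)` over the nonzero ideals `I` of norm at most `x`, which Mertens' first
theorem compares with `log x`. -/
noncomputable def mertensSum (x : ℝ) : ℝ :=
  ∑ I ∈ idealsLE F x, idealVonMangoldt I / Ideal.absNorm I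

lemma exists_abs_sum_log_absNorm_sub_pow_mul_mertensSum_le {C : ℝ} (hC : 0 ≤ C) :
    ∃ K : ℝ, ∀ (v : ι → ℤ) (X : ℕ) (x : ℝ), 0 ≤ x → x ≤ (C * X) ^ Module.finrank ℚ F →
      (∀ a ∈ coordCube b v X, Ideal.span {a} ∈ idealsLE F x) →
        |∑ a ∈ coordCube b v X, Real.log (Ideal.absNorm (Ideal.span {a})) -
          X ^ Module.finrank ℚ F * mertensSum F x| ≤ K * X ^ Module.finrank ℚ F := by
  classical
  obtain ⟨K, hK0, hK⟩ := exists_abs_index_mul_card_filter_coordCube_sub_le b hC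
  rw [card_basis_ringOfIntegers b] at hK
  set n := Module.finrank ℚ F
  have hn : 0 < n := Module.finrank_pos
  set t : ℝ := (n : ℝ)⁻¹
  have ht0 : 0 < t := by positivity
  have ht1 : t ≤ 1 := inv_le_one_of_one_le₀ (by exact_mod_cast hn)
  set D := n * ((Real.log 4 + 4) / t)
  refine ⟨K * D * C, fun v X x hx hxX hcube => ?_⟩
  have hterm (I) (hI : I ∈ idealsLE F x) :
      |idealVonMangoldt I * #{a ∈ coordCube b v X | a ∈ I} -
        X ^ n * (idealVonMangoldt I / Ideal.absNorm I)| ≤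
      K * X ^ (n - 1) * (idealVonMangoldt I * (Ideal.absNorm I : ℝ) ^ (t - 1)) := by
    obtain ⟨hI0, hIx⟩ := mem_idealsLE.mp hI
    exact abs_idealVonMangoldt_mul_sub_le hI0 <| by
      simpa only [Ideal.absNorm_eq_index] using hK I v X hI0 (hIx.trans hxX)
  rw [sum_log_absNorm_eq_sum_idealVonMangoldt_mul_card hcube, mertensSum, mul_sum,
    ← sum_sub_distrib]
  calc _ ≤ ∑ I ∈ idealsLE F x,
          K * X ^ (n - 1) * (idealVonMangoldt I * (Ideal.absNorm I : ℝ) ^ (t - 1)) :=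
        (abs_sum_le_sum_abs _ _).trans (sum_le_sum hterm)
    _ ≤ K * X ^ (n - 1) * (D * x ^ t) := by
        rw [← mul_sum]
        gcongr
        exact sum_idealVonMangoldt_mul_rpow_le ht0 ht1 F hx
    _ ≤ K * X ^ (n - 1) * (D * (C * X)) := by
        gcongr
        rw [Real.rpow_inv_le_iff_of_pos hx (by positivity) (by positivity)]
        exact_mod_cast hxX
    _ = K * D * C * X ^ n := by
        rw [← mul_pow_sub_one hn.ne' (X : ℝ)]
        ring

lemma exists_nat_mul_pow_le_and_le_pow {n : ℕ} (hn : n ≠ 0) {C : ℕ} (hC : 0 < C)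
    {x : ℝ} (hx : (C : ℝ) ^ n ≤ x) :
    ∃ X : ℕ, 0 < X ∧ ((C * X) ^ n : ℝ) ≤ x ∧ x ≤ (2 * C * X) ^ n := by
  have hC' : (0 : ℝ) < C := Nat.cast_pos.mpr hC
  have hx0 : 0 ≤ x := (by positivity : (0 : ℝ) ≤ C ^ n).trans hx
  set y := x ^ (n : ℝ)⁻¹
  have hyx : y ^ n = x := Real.rpow_inv_natCast_pow hx0 hn
  have hy : C ≤ y := by
    refine le_of_pow_le_pow_left₀ hn (by positivity) ?_
    rwa [hyx]
  have hy1 : 1 ≤ y / C := (one_le_div hC').mpr hy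
  have hX1 : 1 ≤ ⌊y / C⌋₊ := Nat.le_floor (by simpa using hy1)
  have hX1' : (1 : ℝ) ≤ ⌊y / C⌋₊ := by exact_mod_cast hX1
  have hle : ⌊y / C⌋₊ ≤ y / C := Nat.floor_le (by positivity)
  have hlt := Nat.lt_floor_add_one (y / C)
  rw [le_div_iff₀ hC'] at hle
  rw [div_lt_iff₀ hC'] at hlt
  refine ⟨⌊y / C⌋₊, hX1, ?_, ?_⟩
  · rw [← hyx]
    gcongr
    linarith
  · rw [← hyx]
    gcongr
    nlinarith

lemma eventually_exists_coordCube_abs_log_absNorm_sub_le :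
    ∃ C L : ℝ, 0 ≤ C ∧ ∀ᶠ x : ℝ in Filter.atTop, ∃ (v : ι → ℤ) (X : ℕ), 0 < X ∧
      x ≤ (C * X) ^ Module.finrank ℚ F ∧ ∀ a ∈ coordCube b v X, Ideal.span {a} ∈ idealsLE F x ∧
        |Real.log (Ideal.absNorm (Ideal.span {a})) - Real.log x| ≤ L := by
  obtain ⟨k, C, hC, hcube⟩ := exists_absNorm_mem_Icc_of_mem_coordCube b
  set n := Module.finrank ℚ F
  have hn : n ≠ 0 := Module.finrank_pos.ne'
  refine ⟨2 * C, n * Real.log (2 * C), by positivity, ?_⟩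
  filter_upwards [Filter.eventually_ge_atTop ((C : ℝ) ^ n)] with x hx
  obtain ⟨X, hX, hXx, hxX⟩ := exists_nat_mul_pow_le_and_le_pow hn hC hx
  have hX' : (0 : ℝ) < X := Nat.cast_pos.mpr hX
  have hx0 : 0 < x := (by positivity : (0 : ℝ) < (C * X) ^ n).trans_le hXx
  refine ⟨b.equivFun (k * X : ℕ), X, hX, hxX, fun a ha => ?_⟩
  obtain ⟨hlower, hupper⟩ := hcube X a ha
  have hpos : (0 : ℝ) < Ideal.absNorm (Ideal.span {a}) := (pow_pos hX' n).trans_le hlower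
  refine ⟨mem_idealsLE.mpr ⟨?_, hupper.trans hXx⟩, ?_⟩
  · exact mt Ideal.absNorm_eq_zero_iff.mpr (Nat.cast_pos.mp hpos).ne'
  have hle := Real.log_le_log hpos (hupper.trans hXx)
  have hge : Real.log x ≤
      n * Real.log (2 * C) + Real.log (Ideal.absNorm (Ideal.span {a})) := by
    rw [← Real.log_pow, ← Real.log_mul (by positivity) hpos.ne']
    refine Real.log_le_log hx0 (hxX.trans ?_)
    rw [mul_pow]
    gcongr
  rw [abs_le]
  constructor <;> linarith

variable (F) in
theorem mertensSum_sub_log_isBigO :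
    (fun x => mertensSum F x - Real.log x) =O[Filter.atTop] (fun _ => (1 : ℝ)) := by
  let b := RingOfIntegers.basis F
  obtain ⟨C, L, hC, hcube⟩ := eventually_exists_coordCube_abs_log_absNorm_sub_le b
  obtain ⟨K, hK⟩ := exists_abs_sum_log_absNorm_sub_pow_mul_mertensSum_le b hC
  set n := Module.finrank ℚ F
  refine Asymptotics.IsBigO.of_bound (K + L) ?_
  filter_upwards [hcube, Filter.eventually_ge_atTop 0] with x ⟨v, X, hX, hxX, hQ⟩ hx0
  have hXn : (0 : ℝ) < X ^ n := by positivity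
  have hmertens := hK v X x hx0 hxX fun a ha => (hQ a ha).1
  have hlog : |∑ a ∈ coordCube b v X, Real.log (Ideal.absNorm (Ideal.span {a})) -
      X ^ n * Real.log x| ≤ X ^ n * L := by
    have hcard : (#(coordCube b v X) : ℝ) = X ^ n := by
      rw [card_coordCube, card_basis_ringOfIntegers b, Nat.cast_pow]
    rw [← hcard, ← nsmul_eq_mul, ← nsmul_eq_mul, ← sum_const, ← sum_sub_distrib]
    exact (abs_sum_le_sum_abs _ _).trans (sum_le_card_nsmul _ _ _ fun a ha => (hQ a ha).2)
  rw [norm_one, mul_one, Real.norm_eq_abs]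
  refine le_of_mul_le_mul_left ?_ hXn
  calc X ^ n * |mertensSum F x - Real.log x|
      = |X ^ n * mertensSum F x - X ^ n * Real.log x| := by
        rw [← mul_sub, abs_mul, abs_of_pos hXn]
    _ ≤ K * X ^ n + X ^ n * L := (abs_sub_le _ _ _).trans
        (add_le_add (by rwa [abs_sub_comm]) hlog)
    _ = X ^ n * (K + L) := by ring

end Mertens

section Chebyshev

open Finset ArithmeticFunction Filter Asymptotics

variable (F : Type*) [Field F] [NumberField F]

/-- The Chebyshev function `ψ` of the number field `F`: the sum of `Λ(I)` over the nonzero ideals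
`I` of norm at most `x`. -/
noncomputable def idealPsi (x : ℝ) : ℝ :=
  ∑ I ∈ idealsLE F x, idealVonMangoldt I

open Classical in
/-- The Chebyshev function `θ` of the number field `F`: the sum of `log N(P)` over the nonzero prime
ideals `P` of norm at most `x`. -/
noncomputable def idealTheta (x : ℝ) : ℝ :=
  ∑ P ∈ idealsLE F x with P.IsPrime, Real.log (Ideal.absNorm P)

lemma idealsLE_mono : Monotone (idealsLE F) := fun _ _ hxy _ hI =>
  mem_idealsLE.mpr ((mem_idealsLE.mp hI).imp_right (le_trans · hxy))

variable {F}

lemma idealPsi_nonneg (x : ℝ) : 0 ≤ idealPsi F x :=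
  sum_nonneg fun I _ => idealVonMangoldt_nonneg I

lemma mertensSum_sub_mertensSum_le {x y : ℝ} (hx : 0 < x) (hxy : x ≤ y) :
    mertensSum F y - mertensSum F x ≤ idealPsi F y / x := by
  rw [mertensSum, mertensSum, ← sum_sdiff_eq_sub (idealsLE_mono F hxy), idealPsi, sum_div]
  calc _ ≤ ∑ I ∈ idealsLE F y \ idealsLE F x, idealVonMangoldt I / x := by
        refine sum_le_sum fun I hI => ?_
        obtain ⟨hIy, hIx⟩ := mem_sdiff.mp hI
        have hxI : x ≤ Ideal.absNorm I :=
          le_of_not_ge fun h => hIx (mem_idealsLE.mpr ⟨(mem_idealsLE.mp hIy).1, h⟩)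
        exact div_le_div_of_nonneg_left (idealVonMangoldt_nonneg I) hx hxI
    _ ≤ _ := sum_le_sum_of_subset_of_nonneg sdiff_subset fun I _ _ =>
        div_nonneg (idealVonMangoldt_nonneg I) hx.le

variable (F)

theorem id_isBigO_idealPsi : (fun x => x) =O[atTop] idealPsi F := by
  obtain ⟨M, hM⟩ := (mertensSum_sub_log_isBigO F).bound
  simp only [norm_one, mul_one, Real.norm_eq_abs] at hM
  set κ := Real.exp (2 * M + 1)
  have hκ : 0 < κ := Real.exp_pos _
  refine IsBigO.of_bound κ ?_
  filter_upwards [hM, (tendsto_id.atTop_div_const hκ).eventually hM, eventually_gt_atTop 0]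
    with y hy hyκ hy0
  have hx : 0 < y / κ := div_pos hy0 hκ
  have hM0 : 0 ≤ M := (abs_nonneg _).trans hy
  have hle : y / κ ≤ y := div_le_self hy0.le (Real.one_le_exp (by linarith))
  have hgrowth : 1 ≤ mertensSum F y - mertensSum F (y / κ) := by
    have hlog : Real.log (y / κ) = Real.log y - (2 * M + 1) := by
      rw [Real.log_div hy0.ne' hκ.ne', Real.log_exp]
    rw [id, hlog] at hyκ
    rw [abs_le] at hy hyκ
    linarith
  have hpsi := hgrowth.trans (mertensSum_sub_mertensSum_le hx hle)
  rw [one_le_div hx, div_le_iff₀ hκ, mul_comm] at hpsi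
  rwa [Real.norm_of_nonneg hy0.le, Real.norm_of_nonneg (idealPsi_nonneg y)]

open Classical in
lemma idealTheta_eq_sum_idealVonMangoldt (x : ℝ) :
    idealTheta F x = ∑ I ∈ idealsLE F x with I.IsPrime, idealVonMangoldt I := by
  refine sum_congr rfl fun I hI => ?_
  obtain ⟨hIx, hIp⟩ := mem_filter.mp hI
  rw [← idealVonMangoldt_prime_pow (Ideal.prime_of_isPrime (mem_idealsLE.mp hIx).1 hIp)
    one_ne_zero, pow_one]

open Classical in
lemma idealPsi_sub_idealTheta_eq_sum_not_isPrime (x : ℝ) :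
    idealPsi F x - idealTheta F x = ∑ I ∈ idealsLE F x with ¬ I.IsPrime, idealVonMangoldt I := by
  rw [idealTheta_eq_sum_idealVonMangoldt, idealPsi, sub_eq_iff_eq_add',
    sum_filter_add_sum_filter_not]

lemma idealPsi_sub_idealTheta_nonneg (x : ℝ) : 0 ≤ idealPsi F x - idealTheta F x :=
  idealPsi_sub_idealTheta_eq_sum_not_isPrime F x ▸ sum_nonneg fun I _ => idealVonMangoldt_nonneg I

lemma idealPsi_sub_idealTheta_le (x : ℝ) :
    idealPsi F x - idealTheta F x ≤
      Module.finrank ℚ F * (Chebyshev.psi x - Chebyshev.theta x) := by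
  rw [idealPsi_sub_idealTheta_eq_sum_not_isPrime, sum_filter]
  calc _ ≤ ∑ I ∈ idealsLE F x,
          idealVonMangoldt I * if (Ideal.absNorm I).Prime then 0 else 1 := by
        refine sum_le_sum fun I _ => ?_
        by_cases hN : (Ideal.absNorm I).Prime
        · simp [hN, Ideal.isPrime_of_irreducible_absNorm hN]
        · rw [if_neg hN, mul_one]
          split_ifs
          exacts [idealVonMangoldt_nonneg I, le_rfl]
    _ ≤ Module.finrank ℚ F *
          ∑ m ∈ Ioc 0 ⌊x⌋₊, vonMangoldt m * if m.Prime then 0 else 1 :=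
        sum_idealVonMangoldt_mul_le x (f := fun m => if m.Prime then 0 else 1) fun m => by
          split_ifs <;> simp
    _ = _ := by
        rw [Chebyshev.psi_sub_theta_eq_sum_not_prime, sum_filter]
        simp only [mul_ite, mul_zero, mul_one, ite_not]

lemma idealPsi_sub_idealTheta_isLittleO :
    (fun x => idealPsi F x - idealTheta F x) =o[atTop] (fun x => x) := by
  have hbound : (fun x => idealPsi F x - idealTheta F x) =O[atTop]
      (Chebyshev.psi - Chebyshev.theta) := by
    refine IsBigO.of_bound (Module.finrank ℚ F) (Eventually.of_forall fun x => ?_)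
    rw [Real.norm_of_nonneg (idealPsi_sub_idealTheta_nonneg F x), Pi.sub_apply, Real.norm_eq_abs]
    exact (idealPsi_sub_idealTheta_le F x).trans (by gcongr; exact le_abs_self _)
  have hsqrt : Real.sqrt =o[atTop] (fun x : ℝ => x) := by
    refine isLittleO_of_tendsto (by simp) ?_
    simp only [Real.sqrt_div_self]
    exact tendsto_inv_atTop_zero.comp Real.tendsto_sqrt_atTop
  exact (hbound.trans Chebyshev.isBigO_psi_sub_theta_sqrt).trans_isLittleO hsqrt

theorem id_isBigO_idealTheta : (fun x => x) =O[atTop] idealTheta F := by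
  have hpsi : idealPsi F =O[atTop] fun x => idealPsi F x - (idealPsi F x - idealTheta F x) :=
    ((idealPsi_sub_idealTheta_isLittleO F).trans_isBigO (id_isBigO_idealPsi F)).right_isBigO_sub
  simp only [sub_sub_cancel] at hpsi
  exact (id_isBigO_idealPsi F).trans hpsi

variable {F}

lemma idealTheta_nonneg (x : ℝ) : 0 ≤ idealTheta F x :=
  sum_nonneg fun _ _ => Real.log_natCast_nonneg _

lemma idealTheta_le_log_absNorm {q : Ideal (𝓞 F)} (hq : q ≠ ⊥) {x : ℝ}
    (h : ∀ P ∈ idealsLE F x, P.IsPrime → P ∣ q) :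
    idealTheta F x ≤ Real.log (Ideal.absNorm q) := by
  classical
  set S := {P ∈ idealsLE F x | P.IsPrime}
  have hprime (P) (hP : P ∈ S) : Prime P :=
    Ideal.prime_of_isPrime (mem_idealsLE.mp (mem_filter.mp hP).1).1 (mem_filter.mp hP).2
  have hpos (P) (hP : P ∈ S) : 0 < Ideal.absNorm P := absNorm_pos (hprime P hP).ne_zero
  have hdvd : ∏ P ∈ S, Ideal.absNorm P ∣ Ideal.absNorm q := by
    rw [← map_prod]
    exact map_dvd _ <| prod_primes_dvd q hprime fun P hP =>
      h P (mem_filter.mp hP).1 (mem_filter.mp hP).2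
  rw [idealTheta, ← Real.log_prod fun P hP => (Nat.cast_pos.mpr (hpos P hP)).ne']
  refine Real.log_le_log (prod_pos fun P hP => Nat.cast_pos.mpr (hpos P hP)) ?_
  exact_mod_cast Nat.le_of_dvd (absNorm_pos hq) hdvd

end Chebyshev

/-- There is a constant `d > 0`, depending only on the number field `F`, such that every
nonzero ideal `q` of `𝓞 F` with `N(q) ≥ 2` admits a nonzero prime ideal `u` not dividing
`q` with `N(u) ≤ d · log N(q)`. -/
theorem exists_small_coprime_prime (F : Type*) [Field F] [NumberField F] :
    ∃ d : ℝ, 0 < d ∧ ∀ q : Ideal (𝓞 F), q ≠ 0 → 2 ≤ Ideal.absNorm q →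
      ∃ u : Ideal (𝓞 F), u.IsPrime ∧ u ≠ 0 ∧ ¬ u ∣ q ∧
        (Ideal.absNorm u : ℝ) ≤ d * Real.log (Ideal.absNorm q) := by
  obtain ⟨c, hc, hbound⟩ := (id_isBigO_idealTheta F).exists_pos
  obtain ⟨x₀, hx₀⟩ := Filter.eventually_atTop.mp hbound.bound
  have hlog2 : 0 < Real.log 2 := Real.log_pos one_lt_two
  set d := max (c + 1) (x₀ / Real.log 2)
  have hcd : c < d := (lt_add_one c).trans_le (le_max_left _ _)
  refine ⟨d, hc.trans hcd, fun q hq hq2 => ?_⟩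
  set L := Real.log (Ideal.absNorm q)
  have hL2 : Real.log 2 ≤ L := Real.log_le_log two_pos (by exact_mod_cast hq2)
  have hx : x₀ ≤ d * L := by
    calc x₀ ≤ d * Real.log 2 := (div_le_iff₀ hlog2).mp (le_max_right _ _)
      _ ≤ d * L := mul_le_mul_of_nonneg_left hL2 (hc.trans hcd).le
  by_contra! hno_prime
  have htheta : idealTheta F (d * L) ≤ L := idealTheta_le_log_absNorm hq fun P hP hPprime =>
    by_contra fun hPq => (hno_prime P hPprime (mem_idealsLE.mp hP).1 hPq).not_ge
      (mem_idealsLE.mp hP).2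
  have hchebyshev : d * L ≤ c * idealTheta F (d * L) := by
    simpa only [Real.norm_of_nonneg (idealTheta_nonneg _)] using
      (Real.le_norm_self _).trans (hx₀ (d * L) hx)
  exact (mul_lt_mul_of_pos_right hcd (hlog2.trans_le hL2)).not_ge
    (hchebyshev.trans (by gcongr))
end

section
/- Let f be a function from the nonzero ideals of 𝒪_F to the positive real numbers which is multiplicative, i.e. f(I·J) = f(I)·f(J) whenever I and J are coprime nonzero ideals. Let d > 0 and assume that for every ε > 0 there exists c_ε > 0 such that f(p^n) ≤ c_ε · N(p)^{(d+ε)·n} for every nonzero prime ideal p of 𝒪_F and every integer n ≥ 0. Then for every ε > 0 there exists C > 0 such that f(q) ≤ C · N(q)^{d+ε} for every nonzero ideal q of 𝒪_F. -/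
open NumberField

/-!
Let `a < b` and suppose `f (p ^ n) ≤ c * N(p) ^ (a n)`. The function `g q = f q / N(q) ^ b`
is again multiplicative, and `g (p ^ n) ≤ c * N(p) ^ (a - b)` for `n ≥ 1`. The right-hand side is
independent of `n` and tends to `0` as `N(p) → ∞`, so it exceeds `1` for only finitely many primes
`p`, and `g` is bounded by the product of the bounds at those primes.
-/

open Filter Topology IsDedekindDomain

theorem exists_eq_prod_heightOneSpectrum_pow {R : Type*} [CommRing R] [IsDedekindDomain R]
    {q : Ideal R} (hq : q ≠ 0) :
    ∃ (T : Finset (HeightOneSpectrum R)) (e : HeightOneSpectrum R → ℕ),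
      q = ∏ v ∈ T, v.asIdeal ^ e v := by
  have h_finite : (Function.mulSupport fun v : HeightOneSpectrum R ↦ v.maxPowDividing q).Finite :=
    Ideal.hasFiniteMulSupport hq
  exact ⟨h_finite.toFinset, fun v ↦ (Associates.mk v.asIdeal).count (Associates.mk q).factors,
    (Ideal.finprod_heightOneSpectrum_factorization hq).symm.trans (finprod_eq_prod _ h_finite)⟩

/-- Multiplicative functions in the sense of number theory, on a semiring such as the ideals of a
Dedekind domain: products of coprime nonzero elements are sent to products. The value at `0` is
irrelevant, and `f 1 = 1` is not imposed, so that the zero function is allowed. -/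
def IsMultiplicativeOnCoprime {α M : Type*} [CommSemiring α] [Mul M] (f : α → M) : Prop :=
  ∀ x y : α, x ≠ 0 → y ≠ 0 → IsCoprime x y → f (x * y) = f x * f y

namespace IsMultiplicativeOnCoprime

section CommSemiring

variable {α : Type*} [CommSemiring α] [Nontrivial α]

theorem map_one_le_one {f : α → ℝ} (hf : IsMultiplicativeOnCoprime f) : f 1 ≤ 1 := by
  have h_idem : f 1 = f 1 * f 1 := by
    simpa only [mul_one] using hf 1 1 one_ne_zero one_ne_zero isCoprime_one_left
  nlinarith [sq_nonneg (f 1 - 1)]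

theorem map_prod [NoZeroDivisors α] {M ι : Type*} [CommMonoid M] {f : α → M}
    (hf : IsMultiplicativeOnCoprime f) {s : Finset ι} {x : ι → α} (hx : ∀ i ∈ s, x i ≠ 0)
    (hcop : (s : Set ι).Pairwise fun i j ↦ IsCoprime (x i) (x j)) :
    f (∏ i ∈ s, x i) = f 1 * ∏ i ∈ s, f (x i) := by
  induction s using Finset.cons_induction with
  | empty => simp only [Finset.prod_empty, mul_one]
  | cons i s hi ih =>
    simp only [Finset.forall_mem_cons] at hx
    rw [Finset.coe_cons, Set.pairwise_insert_of_notMem (mod_cast hi)] at hcop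
    have hi_cop : IsCoprime (x i) (∏ j ∈ s, x j) :=
      IsCoprime.prod_right fun j hj ↦ (hcop.2 j hj).1
    rw [Finset.prod_cons, hf _ _ hx.1 (Finset.prod_ne_zero_iff.mpr hx.2) hi_cop, ih hx.2 hcop.1,
      Finset.prod_cons, mul_left_comm]

end CommSemiring

theorem div {α M : Type*} [CommSemiring α] [DivisionCommMonoid M] {f g : α → M}
    (hf : IsMultiplicativeOnCoprime f) (hg : IsMultiplicativeOnCoprime g) :
    IsMultiplicativeOnCoprime fun x ↦ f x / g x := fun x y hx hy hxy ↦ by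
  simp only [hf x y hx hy hxy, hg x y hx hy hxy, mul_div_mul_comm]

section DedekindDomain

variable {R : Type*} [CommRing R] [IsDedekindDomain R]

theorem exists_forall_le {f : Ideal R → ℝ} (hf : IsMultiplicativeOnCoprime f)
    (hf_nonneg : ∀ q ≠ 0, 0 ≤ f q) {u : HeightOneSpectrum R → ℝ}
    (hfu : ∀ v, ∀ n ≠ 0, f (v.asIdeal ^ n) ≤ u v) (hu : ∀ᶠ v in cofinite, u v ≤ 1) :
    ∃ C : ℝ, 0 < C ∧ ∀ q ≠ 0, f q ≤ C := by
  classical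
  let S := (eventually_cofinite.mp hu).toFinset
  have h_pow_nonneg (v : HeightOneSpectrum R) (n : ℕ) : 0 ≤ f (v.asIdeal ^ n) :=
    hf_nonneg _ (pow_ne_zero n v.ne_bot)
  have h_pow_le (v : HeightOneSpectrum R) (n : ℕ) : f (v.asIdeal ^ n) ≤ max (u v) 1 := by
    obtain rfl | hn := eq_or_ne n 0
    · rw [pow_zero]
      exact hf.map_one_le_one.trans (le_max_right _ _)
    · exact (hfu v n hn).trans (le_max_left _ _)
  refine ⟨∏ v ∈ S, max (u v) 1, Finset.prod_pos fun v _ ↦ by positivity, fun q hq ↦ ?_⟩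
  obtain ⟨T, e, rfl⟩ := exists_eq_prod_heightOneSpectrum_pow hq
  calc
    f (∏ v ∈ T, v.asIdeal ^ e v) = f 1 * ∏ v ∈ T, f (v.asIdeal ^ e v) :=
      hf.map_prod (fun v _ ↦ pow_ne_zero _ v.ne_bot)
        fun v _ w _ hvw ↦ v.isCoprime_pow_of_ne w hvw _ _
    _ ≤ ∏ v ∈ T, f (v.asIdeal ^ e v) :=
      mul_le_of_le_one_left (Finset.prod_nonneg fun v _ ↦ h_pow_nonneg v _) hf.map_one_le_one
    _ ≤ ∏ v ∈ T, max (u v) 1 :=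
      Finset.prod_le_prod (fun v _ ↦ h_pow_nonneg v _) fun v _ ↦ h_pow_le v _
    _ ≤ ∏ v ∈ S ∪ T, max (u v) 1 :=
      Finset.prod_mono_set_of_one_le (fun v ↦ le_max_right _ _) Finset.subset_union_right
    _ = ∏ v ∈ S, max (u v) 1 := by
      refine (Finset.prod_subset Finset.subset_union_left fun v _ hv ↦ max_eq_right ?_).symm
      simpa [S] using hv

end DedekindDomain

end IsMultiplicativeOnCoprime

theorem rpow_mul_natCast_le {x a b : ℝ} (hx : 1 ≤ x) (hab : a ≤ b) {n : ℕ} (hn : n ≠ 0) :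
    x ^ (a * n) ≤ x ^ (a - b) * (x ^ n) ^ b := by
  have hn_one : (1 : ℝ) ≤ n := Nat.one_le_cast.mpr (Nat.one_le_iff_ne_zero.mpr hn)
  calc
    x ^ (a * n) ≤ x ^ (a - b + n * b) := Real.rpow_le_rpow_of_exponent_le hx (by nlinarith)
    _ = x ^ (a - b) * (x ^ n) ^ b := by
      rw [Real.rpow_add (by positivity), Real.rpow_mul (by positivity), Real.rpow_natCast]

section AbsNorm

variable {R : Type*} [CommRing R] [IsDedekindDomain R] [Module.Free ℤ R]

theorem isMultiplicativeOnCoprime_absNorm_rpow (b : ℝ) :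
    IsMultiplicativeOnCoprime fun q : Ideal R ↦ (q.absNorm : ℝ) ^ b := fun I J _ _ _ ↦ by
  simp only [map_mul, Nat.cast_mul, Real.mul_rpow (Nat.cast_nonneg _) (Nat.cast_nonneg _)]

variable [Module.Finite ℤ R]

theorem absNorm_cast_pos {q : Ideal R} (hq : q ≠ 0) : (0 : ℝ) < q.absNorm :=
  Nat.cast_pos.mpr (Nat.pos_of_ne_zero (mt Ideal.absNorm_eq_zero_iff.mp hq))

theorem tendsto_absNorm_rpow_cofinite {s : ℝ} (hs : s < 0) :
    Tendsto (fun v : HeightOneSpectrum R ↦ (v.asIdeal.absNorm : ℝ) ^ s) cofinite (𝓝 0) := by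
  have h_norm : Tendsto (fun v : HeightOneSpectrum R ↦ v.asIdeal.absNorm) cofinite atTop :=
    (northcott_iff_tendsto _).mp inferInstance
  simpa only [neg_neg, Function.comp_def] using
    (tendsto_rpow_neg_atTop (neg_pos.mpr hs)).comp (tendsto_natCast_atTop_atTop.comp h_norm)

theorem div_absNorm_rpow_le {f : Ideal R → ℝ} {a b c : ℝ} (hab : a ≤ b) (hc : 0 ≤ c)
    (v : HeightOneSpectrum R) {n : ℕ} (hn : n ≠ 0)
    (hf : f (v.asIdeal ^ n) ≤ c * (v.asIdeal.absNorm : ℝ) ^ (a * n)) :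
    f (v.asIdeal ^ n) / ((v.asIdeal ^ n).absNorm : ℝ) ^ b ≤
      c * (v.asIdeal.absNorm : ℝ) ^ (a - b) := by
  have h_one_le : (1 : ℝ) ≤ v.asIdeal.absNorm := mod_cast absNorm_cast_pos v.ne_bot
  rw [div_le_iff₀ (Real.rpow_pos_of_pos (absNorm_cast_pos (pow_ne_zero n v.ne_bot)) b), map_pow,
    Nat.cast_pow, mul_assoc]
  exact hf.trans (mul_le_mul_of_nonneg_left (rpow_mul_natCast_le h_one_le hab hn) hc)

theorem multiplicative_asymptotic_bound_general {f : Ideal R → ℝ}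
    (hf : IsMultiplicativeOnCoprime f) (hf_nonneg : ∀ q ≠ 0, 0 ≤ f q) {a b c : ℝ} (hab : a < b)
    (hc : 0 ≤ c) (hfc : ∀ v : HeightOneSpectrum R, ∀ n : ℕ, n ≠ 0 →
      f (v.asIdeal ^ n) ≤ c * (v.asIdeal.absNorm : ℝ) ^ (a * n)) :
    ∃ C : ℝ, 0 < C ∧ ∀ q ≠ 0, f q ≤ C * (q.absNorm : ℝ) ^ b := by
  have h_tendsto : Tendsto (fun v : HeightOneSpectrum R ↦ c * (v.asIdeal.absNorm : ℝ) ^ (a - b))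
      cofinite (𝓝 0) := by
    simpa only [mul_zero] using (tendsto_absNorm_rpow_cofinite (sub_neg.mpr hab)).const_mul c
  obtain ⟨C, hC, hle⟩ := (hf.div (isMultiplicativeOnCoprime_absNorm_rpow b)).exists_forall_le
    (fun q hq ↦ div_nonneg (hf_nonneg q hq) (by positivity))
    (fun v n hn ↦ div_absNorm_rpow_le hab.le hc v hn (hfc v n hn))
    (h_tendsto.eventually_le_const one_pos)
  exact ⟨C, hC, fun q hq ↦
    (div_le_iff₀ (Real.rpow_pos_of_pos (absNorm_cast_pos hq) b)).mp (hle q hq)⟩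

end AbsNorm

/-- If `f` is a positive multiplicative function on the nonzero ideals of `𝓞 F` and
`f(p^n) ≪_ε N(p)^((d+ε)n)` uniformly in the prime `p` and in `n`, then
`f(q) ≪_ε N(q)^(d+ε)` for all nonzero ideals `q`. -/
theorem multiplicative_asymptotic_bound (F : Type*) [Field F] [NumberField F]
    (f : Ideal (𝓞 F) → ℝ)
    (hpos : ∀ q : Ideal (𝓞 F), q ≠ 0 → 0 < f q)
    (hmul : ∀ I J : Ideal (𝓞 F), I ≠ 0 → J ≠ 0 → IsCoprime I J →
      f (I * J) = f I * f J)
    (d : ℝ) (hd : 0 < d)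
    (hprime : ∀ ε : ℝ, 0 < ε → ∃ c : ℝ, 0 < c ∧
      ∀ P : Ideal (𝓞 F), P.IsPrime → P ≠ 0 → ∀ n : ℕ,
        f (P ^ n) ≤ c * (Ideal.absNorm P : ℝ) ^ ((d + ε) * n)) :
    ∀ ε : ℝ, 0 < ε → ∃ C : ℝ, 0 < C ∧
      ∀ q : Ideal (𝓞 F), q ≠ 0 → f q ≤ C * (Ideal.absNorm q : ℝ) ^ (d + ε) := by
  intro ε hε
  obtain ⟨c, hc, hfc⟩ := hprime (ε / 2) (half_pos hε)
  exact multiplicative_asymptotic_bound_general hmul (fun q hq ↦ (hpos q hq).le)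
    (add_lt_add_right (half_lt_self hε) d) hc.le
    fun v n _ ↦ hfc v.asIdeal v.isPrime v.ne_bot n
end

section
/- Let Y be a nonempty finite set with n elements and let dist : Y × Y → ℕ satisfy dist(y₁, y₂) ≤ dist(y₁, z) + dist(y₂, z) for all y₁, y₂, z ∈ Y. Let G be a finite group acting freely on Y such that dist(g·x, g·y) = dist(x, y) for all g ∈ G and x, y ∈ Y, and let c > 0 be a real number with n ≤ c·|G|. Let ε be a real number with 0 < ε < 1/(2c), let M ∈ ℕ, and suppose there is a subset Z ⊆ Y × Y with |Z| ≤ ε·n² such that dist(x, y) ≤ M for every pair (x, y) ∉ Z. Then dist(y₁, y₂) ≤ 2M for all y₁, y₂ ∈ Y. -/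
/-!
By invariance, the number of points at distance more than `M` from `y` is constant along the orbit
of `y`. Each of them yields `|G y|` exceptional pairs, so with orbits of size `|G| ≥ n / c` there
are at most `|Z| / |G| ≤ ε n² / |G| ≤ ε c n < n / 2` of them. Hence any two points `y₁`, `y₂` have
a common neighbour `z` at distance at most `M` from both, and `d y₁ y₂ ≤ d y₁ z + d y₂ z ≤ 2 M`.
-/

open Finset MulAction

/-- The points far from `y`: the complement of the closed ball of radius `M` about `y`, for a
distance-like function `d`. Writing `¬ d y z ≤ M` rather than `M < d y z` lets `d` take values in
a preorder. -/
noncomputable def farPoints {Y R : Type*} [Fintype Y] [LE R] (d : Y → Y → R) (M : R) (y : Y) :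
    Finset Y :=
  open Classical in {z | ¬ d y z ≤ M}

section FarPoints

variable {Y G R : Type*} [Fintype Y] {d : Y → Y → R} {M : R}

@[simp]
lemma mem_farPoints [LE R] {y z : Y} : z ∈ farPoints d M y ↔ ¬ d y z ≤ M := by
  simp [farPoints]

lemma card_farPoints_smul [LE R] [Group G] [MulAction G Y]
    (hinv : ∀ (g : G) (x y : Y), d (g • x) (g • y) = d x y) (g : G) (y : Y) :
    #(farPoints d M (g • y)) = #(farPoints d M y) :=
  .symm <| card_equiv (toPerm g) (by simp [hinv])

lemma card_orbit_mul_card_farPoints_le [LE R] [Group G] [MulAction G Y]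
    (hinv : ∀ (g : G) (x y : Y), d (g • x) (g • y) = d x y) {Z : Finset (Y × Y)}
    (hZ : ∀ p ∉ Z, d p.1 p.2 ≤ M) (y : Y) :
    Nat.card (orbit G y) * #(farPoints d M y) ≤ #Z := by
  classical
  have hconst : ∀ x ∈ (orbit G y).toFinset, #(farPoints d M x) = #(farPoints d M y) := by
    intro x hx
    obtain ⟨g, rfl⟩ := Set.mem_toFinset.mp hx
    exact card_farPoints_smul hinv g y
  calc Nat.card (orbit G y) * #(farPoints d M y)
      = ∑ x ∈ (orbit G y).toFinset, #(farPoints d M x) := by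
        rw [sum_const_nat hconst, Set.toFinset_card, Nat.card_eq_fintype_card]
    _ = #((orbit G y).toFinset.sigma (farPoints d M)) := (card_sigma ..).symm
    _ ≤ #Z := by
        refine card_le_card_of_injOn (Equiv.sigmaEquivProd Y Y) (fun p hp ↦ ?_)
          (Equiv.injective _).injOn
        exact not_imp_comm.mp (hZ _) (mem_farPoints.mp (mem_sigma.mp hp).2)

lemma le_two_nsmul_of_card_farPoints_add_lt [AddCommMonoid R] [Preorder R] [IsOrderedAddMonoid R]
    (htri : ∀ y₁ y₂ z, d y₁ y₂ ≤ d y₁ z + d y₂ z) {y₁ y₂ : Y}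
    (h : #(farPoints d M y₁) + #(farPoints d M y₂) < Fintype.card Y) :
    d y₁ y₂ ≤ 2 • M := by
  classical
  obtain ⟨z, -, hz⟩ := exists_mem_notMem_of_card_lt_card ((card_union_le _ _).trans_lt h)
  obtain ⟨hz₁, hz₂⟩ : d y₁ z ≤ M ∧ d y₂ z ≤ M := by simpa using hz
  calc d y₁ y₂ ≤ d y₁ z + d y₂ z := htri y₁ y₂ z
    _ ≤ M + M := add_le_add hz₁ hz₂
    _ = 2 • M := (two_nsmul M).symm

theorem diameter_le_two_mul_almost_diameter_general [AddCommMonoid R] [Preorder R]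
    [IsOrderedAddMonoid R] [Group G] [MulAction G Y]
    (htri : ∀ y₁ y₂ z, d y₁ y₂ ≤ d y₁ z + d y₂ z)
    (hinv : ∀ (g : G) (x y : Y), d (g • x) (g • y) = d x y)
    {Z : Finset (Y × Y)} (hZ : ∀ y : Y, 2 * #Z < Nat.card (orbit G y) * Fintype.card Y)
    (hM : ∀ p ∉ Z, d p.1 p.2 ≤ M) (y₁ y₂ : Y) :
    d y₁ y₂ ≤ 2 • M := by
  have hfar (y : Y) : 2 * #(farPoints d M y) < Fintype.card Y := by
    refine lt_of_mul_lt_mul_left' (a := Nat.card (orbit G y)) ?_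
    calc Nat.card (orbit G y) * (2 * #(farPoints d M y))
        = 2 * (Nat.card (orbit G y) * #(farPoints d M y)) := mul_left_comm ..
      _ ≤ 2 * #Z := Nat.mul_le_mul_left 2 (card_orbit_mul_card_farPoints_le hinv hM y)
      _ < Nat.card (orbit G y) * Fintype.card Y := hZ y
  exact le_two_nsmul_of_card_farPoints_add_lt htri (by have := hfar y₁; have := hfar y₂; omega)

end FarPoints

lemma card_orbit_of_stabilizer_eq_bot {Y G : Type*} [Group G] [MulAction G Y] {y : Y}
    (h : stabilizer G y = ⊥) : Nat.card (orbit G y) = Nat.card G := by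
  rw [Nat.card_coe_set_eq, ← index_stabilizer, h, Subgroup.index_bot]

lemma two_mul_lt_mul_of_le_mul_sq {K : Type*} [Field K] [LinearOrder K] [IsStrictOrderedRing K]
    {c ε k m n : K} (hn : 0 < n) (hc : 0 < c) (hnm : n ≤ c * m) (hε : ε < 1 / (2 * c))
    (hk : k ≤ ε * n ^ 2) : 2 * k < m * n :=
  calc 2 * k ≤ 2 * (ε * n ^ 2) := by gcongr
    _ < 2 * (1 / (2 * c) * n ^ 2) := by gcongr
    _ = n / c * n := by field_simp
    _ ≤ m * n := by gcongr; exact (div_le_iff₀' hc).mpr hnm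

/-- Diameter vs almost diameter: if a finite group `G` acts freely and isometrically on a
finite set `Y` with `|Y| ≤ c·|G|`, `dist` satisfies the triangle-type inequality
`dist y₁ y₂ ≤ dist y₁ z + dist y₂ z`, and all pairs outside an exceptional set `Z` of size
at most `ε·n²` (with `ε < 1/(2c)`) are at distance at most `M`, then every pair of points
is at distance at most `2M`. -/
theorem diameter_le_two_mul_almost_diameter {Y G : Type*} [Fintype Y] [Nonempty Y]
    [Group G] [Fintype G] [MulAction G Y]
    (dist : Y → Y → ℕ)
    (htri : ∀ y₁ y₂ z, dist y₁ y₂ ≤ dist y₁ z + dist y₂ z)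
    (hfree : ∀ (g : G) (y : Y), g • y = y → g = 1)
    (hinv : ∀ (g : G) (x y : Y), dist (g • x) (g • y) = dist x y)
    (c : ℝ) (hc : 0 < c)
    (hcard : (Fintype.card Y : ℝ) ≤ c * (Fintype.card G : ℝ))
    (ε : ℝ) (hε0 : 0 < ε) (hε : ε < 1 / (2 * c))
    (M : ℕ) (Z : Finset (Y × Y))
    (hZ : (Z.card : ℝ) ≤ ε * (Fintype.card Y : ℝ) ^ 2)
    (hM : ∀ p : Y × Y, p ∉ Z → dist p.1 p.2 ≤ M) :
    ∀ y₁ y₂ : Y, dist y₁ y₂ ≤ 2 * M := by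
  refine diameter_le_two_mul_almost_diameter_general htri hinv (fun y ↦ ?_) hM
  have hstab : stabilizer G y = ⊥ := (Subgroup.eq_bot_iff_forall _).mpr fun g ↦ hfree g y
  rw [card_orbit_of_stabilizer_eq_bot hstab, Nat.card_eq_fintype_card]
  exact_mod_cast two_mul_lt_mul_of_le_mul_sq (by simp [Fintype.card_pos]) hc hcard hε hZ
end
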